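/- Let d ≥ 1, R₀ > 0, σ ∈ ℝ, and let c ∈ ℂ satisfy c² = σ. Let Ψ : ℝ^d → ℂ be smooth on the open ball B(0, 2R₀) and satisfy ΔΨ = σΨ there, where Δ = Σ_{j=1}^d ∂²/∂y_j² is the Euclidean Laplacian. Let β : B(0, 2R₀) → [0, ∞) be a bounded measurable rotationally invariant function (β(Ry) = β(y) for every orthogonal transformation R and every y). Then for all 0 < R < R₀, ∫_{|Y| ≤ 2R} Ψ(Y) β(Y) dY = Ψ(0) ∫_{|Y| ≤ 2R} e^{c Y₁} β(Y) dY, where Y = (Y₁, …, Y_d). -/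

import Mathlib

open MeasureTheory Metric

/-- The Euclidean Laplacian `Δ Ψ = Σ_j ∂²Ψ/∂y_j²` of a function on `ℝ^d`. -/
noncomputable def lap {d : ℕ} (Ψ : EuclideanSpace ℝ (Fin d) → ℂ)
    (x : EuclideanSpace ℝ (Fin d)) : ℂ :=
  ∑ j : Fin d,
    fderiv ℝ (fun y => fderiv ℝ Ψ y (EuclideanSpace.single j 1)) x (EuclideanSpace.single j 1)


namespace EigAux

open Filter Topology

lemma hasDerivAt_max_pow (n : ℕ) (s : ℝ) :
    HasDerivAt (fun s : ℝ => (max 0 s) ^ (n + 2)) ((n + 2) * (max 0 s) ^ (n + 1)) s := by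
  rcases lt_trichotomy s 0 with h | h | h
  · have : (fun s : ℝ => (max 0 s) ^ (n + 2)) =ᶠ[𝓝 s] fun _ => 0 := by
      filter_upwards [Iio_mem_nhds h] with x hx
      rw [max_eq_left (le_of_lt hx)]; simp
    rw [max_eq_left h.le]
    simpa using (hasDerivAt_const s (0 : ℝ)).congr_of_eventuallyEq this
  · subst h
    simp only [max_self]
    rw [hasDerivAt_iff_isLittleO_nhds_zero]
    simp only [zero_add, max_self, ne_eq, Nat.add_eq_zero_iff, OfNat.ofNat_ne_zero, and_false,
      not_false_eq_true, zero_pow, sub_zero, one_ne_zero, mul_zero, smul_eq_mul]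
    have h1 : (fun h : ℝ => (max 0 h) ^ (n + 2)) =O[𝓝 0] fun h : ℝ => h ^ (n + 2) := by
      refine Asymptotics.IsBigO.of_bound 1 (Eventually.of_forall fun x => ?_)
      rw [one_mul, norm_pow, norm_pow]
      gcongr
      rw [Real.norm_eq_abs, Real.norm_eq_abs, abs_of_nonneg (le_max_left 0 x)]
      exact max_le (abs_nonneg _) (le_abs_self _)
    refine h1.trans_isLittleO ?_
    exact Asymptotics.isLittleO_pow_id (by omega)
  · have : (fun s : ℝ => (max 0 s) ^ (n + 2)) =ᶠ[𝓝 s] fun x => x ^ (n + 2) := by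
      filter_upwards [Ioi_mem_nhds h] with x hx
      rw [max_eq_right (le_of_lt hx)]
    rw [max_eq_right h.le]
    have := (hasDerivAt_pow (n + 2) s).congr_of_eventuallyEq this
    refine this.congr_deriv ?_
    push_cast
    rfl

variable {d : ℕ}

/-- the radial weights -/
noncomputable def w (k : ℕ) (y : EuclideanSpace ℝ (Fin d)) : ℝ := (max 0 (1 - ‖y‖ ^ 2)) ^ k

lemma w_cont (k : ℕ) : Continuous (w k : EuclideanSpace ℝ (Fin d) → ℝ) := by
  unfold w; fun_prop

lemma w_nonneg (k : ℕ) (y : EuclideanSpace ℝ (Fin d)) : 0 ≤ w k y := by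
  unfold w; positivity

lemma w_le_one (k : ℕ) (y : EuclideanSpace ℝ (Fin d)) : w k y ≤ 1 := by
  unfold w
  apply pow_le_one₀ (le_max_left _ _)
  apply max_le (by norm_num)
  nlinarith [sq_nonneg ‖y‖]

lemma w_zero (k : ℕ) (hk : k ≠ 0) (y : EuclideanSpace ℝ (Fin d))
    (hy : y ∉ closedBall (0 : EuclideanSpace ℝ (Fin d)) 1) : w k y = 0 := by
  unfold w
  have : 1 < ‖y‖ := by simpa using hy
  rw [max_eq_left (by nlinarith), zero_pow hk]

lemma w_compact (k : ℕ) (hk : k ≠ 0) :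
    HasCompactSupport (w k : EuclideanSpace ℝ (Fin d) → ℝ) :=
  HasCompactSupport.intro (isCompact_closedBall _ _) (fun y hy => w_zero k hk y hy)

lemma w_deriv (k : ℕ) (hk : 1 ≤ k) (y : EuclideanSpace ℝ (Fin d)) :
    HasFDerivAt (w (k + 1)) ((-(2 * (k + 1)) * w k y) • innerSL ℝ y) y := by
  obtain ⟨n, rfl⟩ := Nat.exists_eq_add_of_le' hk
  have h1 := hasDerivAt_max_pow n (1 - ‖y‖ ^ 2)
  have h2 : HasFDerivAt (fun y : EuclideanSpace ℝ (Fin d) => 1 - ‖y‖ ^ 2)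
    (-(2 • innerSL ℝ y)) y := (hasStrictFDerivAt_norm_sq y).hasFDerivAt.const_sub 1
  have h3 := h1.comp_hasFDerivAt y h2
  have h4 : w (n + 1 + 1) = (fun s : ℝ => (max 0 s) ^ (n + 2)) ∘
      (fun y : EuclideanSpace ℝ (Fin d) => 1 - ‖y‖ ^ 2) := by
    ext y; simp [w]
  rw [h4]
  refine h3.congr_fderiv ?_
  ext z
  simp [w]
  ring

/-- the complex-valued integrals against the weights -/
noncomputable def A (v : EuclideanSpace ℝ (Fin d) → ℂ) (k : ℕ) (t : ℝ) : ℂ :=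
  ∫ y, v (t • y) * (w k y : ℂ)

lemma int_w (k : ℕ) (hk : k ≠ 0) (f : EuclideanSpace ℝ (Fin d) → ℂ) (hf : Continuous f) :
    Integrable (fun y => f y * (w k y : ℂ)) := by
  apply Continuous.integrable_of_hasCompactSupport
  · have := w_cont (d := d) k
    fun_prop
  · exact HasCompactSupport.intro (isCompact_closedBall (0 : EuclideanSpace ℝ (Fin d)) 1)
      (fun y hy => by simp [w_zero k hk y hy])

lemma ibp (v : EuclideanSpace ℝ (Fin d) → ℂ) (hv : ContDiff ℝ 2 v) (k : ℕ) (hk : 1 ≤ k)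
    (t : ℝ) (j : Fin d) :
    ∫ y, fderiv ℝ v (t • y) (EuclideanSpace.single j 1) * ((y j : ℝ) : ℂ) * (w k y : ℂ) =
      (t / (2 * (k + 1)) : ℂ) * ∫ y, fderiv ℝ (fun z => fderiv ℝ v z (EuclideanSpace.single j 1))
        (t • y) (EuclideanSpace.single j 1) * (w (k + 1) y : ℂ) := by
  set e : EuclideanSpace ℝ (Fin d) := EuclideanSpace.single j 1 with he
  set p : EuclideanSpace ℝ (Fin d) → ℂ := fun z => fderiv ℝ v z e with hp
  have hpc : ContDiff ℝ 1 p := by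
    have : ContDiff ℝ 1 (fderiv ℝ v) := hv.fderiv_right (by norm_num)
    exact this.clm_apply contDiff_const
  have hpd : Differentiable ℝ p := hpc.differentiable (by norm_num)
  have hpcont : Continuous (fun z => fderiv ℝ p z e) :=
    (hpc.continuous_fderiv (by norm_num)).clm_apply continuous_const
  have hsm : Continuous (fun y : EuclideanSpace ℝ (Fin d) => t • y) := continuous_const_smul t
  have hg (y : EuclideanSpace ℝ (Fin d)) : HasFDerivAt (fun y => (w (k + 1) y : ℂ))
      (Complex.ofRealCLM ∘L ((-(2 * (k + 1)) * w k y) • innerSL ℝ y)) y :=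
    Complex.ofRealCLM.hasFDerivAt.comp y (w_deriv k hk y)
  have hg' (y : EuclideanSpace ℝ (Fin d)) : fderiv ℝ (fun y : EuclideanSpace ℝ (Fin d) => (w (k + 1) y : ℂ)) y e = -(2 * (k + 1)) * (w k y : ℂ) * (y j : ℂ) := by
    rw [(hg y).fderiv]
    simp [he, EuclideanSpace.inner_single_right]
  have hf (y) : HasFDerivAt (fun y => p (t • y))
      (fderiv ℝ p (t • y) ∘L (t • ContinuousLinearMap.id ℝ _)) y := by
    have h1 : HasFDerivAt (fun y : EuclideanSpace ℝ (Fin d) => t • y)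
      (t • ContinuousLinearMap.id ℝ _) y := (hasFDerivAt_id y).const_smul t
    exact (hpd (t • y)).hasFDerivAt.comp y h1
  have hf' (y) : fderiv ℝ (fun y => p (t • y)) y e = t * fderiv ℝ p (t • y) e := by
    rw [(hf y).fderiv]
    simp
  have key := integral_mul_fderiv_eq_neg_fderiv_mul_of_integrable (μ := volume)
    (f := fun y => p (t • y)) (g := fun y : EuclideanSpace ℝ (Fin d) => (w (k + 1) y : ℂ)) (v := e) ?_ ?_ ?_
    (fun y _ => (hf y).differentiableAt) (fun y _ => (hg y).differentiableAt)
  · simp only [hf', hg'] at key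
    have e1 : ∀ y : EuclideanSpace ℝ (Fin d), p (t • y) * (-(2 * ((k : ℂ) + 1)) * (w k y : ℂ) * (y j : ℂ)) =
      (-(2 * ((k : ℂ) + 1))) * (p (t • y) * (y j : ℂ) * (w k y : ℂ)) := fun y => by ring
    have e2 : ∀ y : EuclideanSpace ℝ (Fin d), (t : ℂ) * fderiv ℝ p (t • y) e * (w (k + 1) y : ℂ) =
      (t : ℂ) * (fderiv ℝ p (t • y) e * (w (k + 1) y : ℂ)) := fun y => by ring
    simp only [e1, e2, integral_const_mul] at key
    have hk0 : ((k : ℂ) + 1) ≠ 0 := by exact_mod_cast Nat.succ_ne_zero k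
    field_simp
    linear_combination -key
  · simp only [hf']
    apply int_w (k + 1) (by omega)
    exact continuous_const.mul (hpcont.comp hsm)
  · simp only [hg']
    have := int_w k (by omega) (fun y : EuclideanSpace ℝ (Fin d) =>
      p (t • y) * (-(2 * ((k : ℂ) + 1)) * (y j : ℂ))) (by
        have := hpc.continuous.comp hsm
        apply this.mul
        fun_prop)
    refine this.congr (Eventually.of_forall fun y => ?_)
    simp only
    ring
  · exact int_w (k + 1) (by omega) _ (hpc.continuous.comp hsm)

lemma A_deriv_raw (v : EuclideanSpace ℝ (Fin d) → ℂ) (hv : ContDiff ℝ 2 v) (k : ℕ) (hk : 1 ≤ k)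
    (t : ℝ) :
    HasDerivAt (A v k) (∫ y, fderiv ℝ v (t • y) y * (w k y : ℂ)) t := by
  have hk0 : k ≠ 0 := by omega
  have hvd : Differentiable ℝ v := hv.differentiable (by norm_num)
  have hfc : Continuous (fderiv ℝ v) := hv.continuous_fderiv (by norm_num)
  obtain ⟨C, hC⟩ := (isCompact_closedBall (0 : EuclideanSpace ℝ (Fin d)) (|t| + 1)).exists_bound_of_continuousOn
    hfc.continuousOn
  have hcont : ∀ s : ℝ, Continuous (fun y : EuclideanSpace ℝ (Fin d) => v (s • y)) :=
    fun s => hv.continuous.comp (continuous_const_smul s)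
  have hint1 : Integrable (fun y : EuclideanSpace ℝ (Fin d) => C * w k y) := by
    apply Integrable.const_mul
    exact (w_cont k).integrable_of_hasCompactSupport (w_compact k hk0)
  refine (hasDerivAt_integral_of_dominated_loc_of_deriv_le (μ := volume) (s := ball t 1)
    (F := fun (t : ℝ) (y : EuclideanSpace ℝ (Fin d)) => v (t • y) * (w k y : ℂ))
    (F' := fun (t : ℝ) (y : EuclideanSpace ℝ (Fin d)) => fderiv ℝ v (t • y) y * (w k y : ℂ))
    (bound := fun y => C * w k y)
    (ball_mem_nhds t one_pos) ?_ ?_ ?_ ?_ hint1 ?_).2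
  · exact Eventually.of_forall fun s => (int_w k hk0 _ (hcont s)).aestronglyMeasurable
  · exact int_w k hk0 _ (hcont t)
  · refine (int_w k hk0 _ ?_).aestronglyMeasurable
    exact (hfc.comp (continuous_const_smul t)).clm_apply continuous_id
  · refine Eventually.of_forall fun y s hs => ?_
    by_cases hy : y ∈ closedBall (0 : EuclideanSpace ℝ (Fin d)) 1
    · rw [norm_mul, Complex.norm_real, Real.norm_eq_abs, abs_of_nonneg (w_nonneg k y)]
      gcongr
      · exact w_nonneg k y
      have hy1 : ‖y‖ ≤ 1 := by simpa using hy
      have hs1 : |s| ≤ |t| + 1 := by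
        have : |s - t| < 1 := by simpa [Real.dist_eq] using hs
        have := abs_sub_abs_le_abs_sub s t
        linarith
      have hm : s • y ∈ closedBall (0 : EuclideanSpace ℝ (Fin d)) (|t| + 1) := by
        simp only [mem_closedBall, dist_zero_right, norm_smul, Real.norm_eq_abs]
        nlinarith [abs_nonneg s, norm_nonneg y]
      have h1 := hC _ hm
      calc ‖fderiv ℝ v (s • y) y‖ ≤ ‖fderiv ℝ v (s • y)‖ * ‖y‖ := ContinuousLinearMap.le_opNorm _ _
        _ ≤ C := by nlinarith [norm_nonneg y, norm_nonneg (fderiv ℝ v (s • y))]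
    · simp [w_zero k hk0 y hy]
  · refine Eventually.of_forall fun y s hs => ?_
    have h1 : HasDerivAt (fun s : ℝ => s • y) y s := by
      simpa using (hasDerivAt_id s).smul_const y
    exact ((hvd (s • y)).hasFDerivAt.comp_hasDerivAt s h1).mul_const _

lemma A_deriv (v : EuclideanSpace ℝ (Fin d) → ℂ) (hv : ContDiff ℝ 2 v) (k : ℕ) (hk : 1 ≤ k)
    (T : ℝ) (σ : ℝ)
    (hlap : ∀ x ∈ ball (0 : EuclideanSpace ℝ (Fin d)) T, lap v x = (σ : ℂ) * v x)
    (t : ℝ) (ht0 : 0 ≤ t) (ht : t < T) :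
    HasDerivAt (A v k) ((t / (2 * (k + 1)) : ℂ) * (σ * A v (k + 1) t)) t := by
  have hk0 : k ≠ 0 := by omega
  have hfc : Continuous (fderiv ℝ v) := hv.continuous_fderiv (by norm_num)
  have hsm : Continuous (fun y : EuclideanSpace ℝ (Fin d) => t • y) := continuous_const_smul t
  refine (A_deriv_raw v hv k hk t).congr_deriv ?_
  have e1 : ∀ y : EuclideanSpace ℝ (Fin d), fderiv ℝ v (t • y) y * (w k y : ℂ) =
      ∑ j, fderiv ℝ v (t • y) (EuclideanSpace.single j 1) * ((y j : ℝ) : ℂ) * (w k y : ℂ) := by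
    intro y
    rw [← Finset.sum_mul]
    congr 1
    have hy : y = ∑ j, (y j) • EuclideanSpace.single j (1 : ℝ) := by
      ext i
      simp [Pi.single_apply]
    have h3 : ∀ f : EuclideanSpace ℝ (Fin d) →L[ℝ] ℂ, f y = ∑ j, f ((y j) • EuclideanSpace.single j (1 : ℝ)) :=
      fun f => by rw [← map_sum, ← hy]
    rw [h3]
    refine Finset.sum_congr rfl fun j _ => ?_
    rw [map_smul, Complex.real_smul, mul_comm]
  simp only [e1]
  rw [integral_finsetSum]
  · simp only [ibp v hv k hk t]
    rw [← Finset.mul_sum, ← integral_finsetSum]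
    · congr 1
      rw [A, ← integral_const_mul]
      refine integral_congr_ae (Eventually.of_forall fun y => ?_)
      simp only
      rw [← Finset.sum_mul]
      by_cases hy : y ∈ closedBall (0 : EuclideanSpace ℝ (Fin d)) 1
      · have hm : t • y ∈ ball (0 : EuclideanSpace ℝ (Fin d)) T := by
          have hy1 : ‖y‖ ≤ 1 := by simpa using hy
          simp only [mem_ball, dist_zero_right, norm_smul, Real.norm_eq_abs, abs_of_nonneg ht0]
          nlinarith
        have := hlap _ hm
        rw [lap] at this
        rw [this]
        ring
      · simp [w_zero (k + 1) (by omega) y hy]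
    · intro j _
      apply int_w (k + 1) (by omega)
      have : ContDiff ℝ 1 (fderiv ℝ v) := hv.fderiv_right (by norm_num)
      have h2 : ContDiff ℝ 1 (fun z => fderiv ℝ v z (EuclideanSpace.single j 1)) :=
        this.clm_apply contDiff_const
      exact ((h2.continuous_fderiv (by norm_num)).comp hsm).clm_apply continuous_const
  · intro j _
    apply int_w k hk0
    refine ((hfc.comp hsm).clm_apply continuous_const).mul ?_
    fun_prop

lemma A_bound (v : EuclideanSpace ℝ (Fin d) → ℂ) (hv : ContDiff ℝ 2 v) (T : ℝ) :
    ∃ C : ℝ, 0 ≤ C ∧ ∀ k, 1 ≤ k → ∀ t, 0 ≤ t → t ≤ T → ‖A v k t‖ ≤ C := by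
  obtain ⟨C, hC⟩ := (isCompact_closedBall (0 : EuclideanSpace ℝ (Fin d)) T).exists_bound_of_continuousOn
    hv.continuous.continuousOn
  have hint : Integrable ((closedBall (0 : EuclideanSpace ℝ (Fin d)) 1).indicator (fun _ => |C|)) := by
    rw [integrable_indicator_iff measurableSet_closedBall]
    exact integrableOn_const measure_closedBall_lt_top.ne
  refine ⟨∫ y, (closedBall (0 : EuclideanSpace ℝ (Fin d)) 1).indicator (fun _ => |C|) y,
    integral_nonneg fun y => Set.indicator_nonneg (fun _ _ => abs_nonneg _) y, ?_⟩
  intro k hk t ht0 ht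
  refine norm_integral_le_of_norm_le hint (Eventually.of_forall fun y => ?_)
  by_cases hy : y ∈ closedBall (0 : EuclideanSpace ℝ (Fin d)) 1
  · rw [Set.indicator_of_mem hy, norm_mul, Complex.norm_real, Real.norm_eq_abs,
      abs_of_nonneg (w_nonneg k y)]
    have hm : t • y ∈ closedBall (0 : EuclideanSpace ℝ (Fin d)) T := by
      have hy1 : ‖y‖ ≤ 1 := by simpa using hy
      simp only [mem_closedBall, dist_zero_right, norm_smul, Real.norm_eq_abs, abs_of_nonneg ht0]
      nlinarith
    have h1 := (hC _ hm).trans (le_abs_self C)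
    calc ‖v (t • y)‖ * w k y ≤ |C| * 1 :=
          mul_le_mul h1 (w_le_one k y) (w_nonneg k y) (abs_nonneg _)
      _ = |C| := mul_one _
  · simp [w_zero k (by omega) y hy, Set.indicator_of_notMem hy]

lemma A_zero (v : EuclideanSpace ℝ (Fin d) → ℂ) (hv : ContDiff ℝ 2 v) (hv0 : v 0 = 0)
    (T : ℝ) (σ : ℝ)
    (hlap : ∀ x ∈ ball (0 : EuclideanSpace ℝ (Fin d)) T, lap v x = (σ : ℂ) * v x)
    (t : ℝ) (ht0 : 0 ≤ t) (ht : t < T) : A v 1 t = 0 := by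
  obtain ⟨C, hC0, hC⟩ := A_bound v hv T
  set L : ℝ := T * |σ| with hL
  have hT : 0 ≤ T := by linarith
  have key : ∀ n : ℕ, ∀ k, 1 ≤ k → ∀ s ∈ Set.Icc 0 t, ‖A v k s‖ ≤ C * ((L * s) ^ n / n.factorial) := by
    intro n
    induction n with
    | zero =>
      intro k hk s hs
      simpa using hC k hk s hs.1 (by linarith [hs.2])
    | succ n ih =>
      intro k hk
      have hd : ∀ x ∈ Set.Icc 0 t, HasDerivAt (A v k) ((x / (2 * (k + 1)) : ℂ) * (σ * A v (k + 1) x)) x :=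
        fun x hx => A_deriv v hv k hk T σ hlap x hx.1 (by linarith [hx.2])
      refine image_norm_le_of_norm_deriv_right_le_deriv_boundary
        (f' := fun x => ((x / (2 * (k + 1)) : ℂ) * (σ * A v (k + 1) x)))
        (B := fun s => C * ((L * s) ^ (n + 1) / (n + 1).factorial))
        (B' := fun s => C * (L * ((L * s) ^ n / n.factorial)))
        (fun x hx => (hd x hx).continuousAt.continuousWithinAt)
        (fun x hx => (hd x ⟨hx.1, hx.2.le⟩).hasDerivWithinAt) ?_ ?_ ?_
      · simp [A, hv0]
      · intro x
        have h1 : HasDerivAt (fun s : ℝ => L * s) L x := by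
          simpa using (hasDerivAt_id x).const_mul L
        have h2 := ((h1.pow (n + 1)).div_const ((n + 1).factorial : ℝ)).const_mul C
        refine h2.congr_deriv ?_
        have : (n.factorial : ℝ) ≠ 0 := by positivity
        rw [Nat.factorial_succ]
        push_cast
        field_simp
        try simp
      · intro x hx
        have h1 := ih (k + 1) (by omega) x ⟨hx.1, hx.2.le⟩
        have hxk : ‖((x : ℂ) / (2 * (k + 1)))‖ ≤ T := by
          have : ((x : ℂ) / (2 * (k + 1))) = ((x / (2 * (k + 1)) : ℝ) : ℂ) := by push_cast; rfl
          rw [this, Complex.norm_real, Real.norm_eq_abs, abs_of_nonneg (by have := hx.1; positivity)]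
          have hk' : (0 : ℝ) ≤ k := by positivity
          have : x / (2 * (k + 1)) ≤ x := div_le_self hx.1 (by linarith)
          linarith [hx.2]
        rw [norm_mul, norm_mul, Complex.norm_real, Real.norm_eq_abs]
        calc ‖((x : ℂ) / (2 * (k + 1)))‖ * (|σ| * ‖A v (k + 1) x‖)
            ≤ T * (|σ| * (C * ((L * x) ^ n / n.factorial))) := by gcongr
          _ = _ := by rw [hL]; ring
  have hlim : Tendsto (fun n : ℕ => C * ((L * t) ^ n / n.factorial)) atTop (𝓝 (C * 0)) :=
    (FloorSemiring.tendsto_pow_div_factorial_atTop (L * t)).const_mul C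
  rw [mul_zero] at hlim
  have := ge_of_tendsto' hlim (fun n => key n 1 le_rfl t ⟨ht0, le_rfl⟩)
  exact norm_le_zero_iff.1 this

lemma F_zero (v : EuclideanSpace ℝ (Fin d) → ℂ) (hv : ContDiff ℝ 2 v) (hv0 : v 0 = 0)
    (T : ℝ) (hT : 0 < T) (σ : ℝ)
    (hlap : ∀ x ∈ ball (0 : EuclideanSpace ℝ (Fin d)) T, lap v x = (σ : ℂ) * v x)
    (τ : ℝ) (h0 : 0 ≤ τ) (h1 : τ < T ^ 2) :
    ∫ x, v x * ((max 0 (τ - ‖x‖ ^ 2) : ℝ) : ℂ) = 0 := by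
  rcases h0.eq_or_lt with rfl | h0
  · have : ∀ x : EuclideanSpace ℝ (Fin d), max 0 (0 - ‖x‖ ^ 2) = 0 := fun x =>
      max_eq_left (by nlinarith [sq_nonneg ‖x‖])
    simp [this]
  · set t := Real.sqrt τ with ht
    have htp : 0 < t := Real.sqrt_pos.2 h0
    have htt : t ^ 2 = τ := Real.sq_sqrt h0.le
    have htT : t < T := (Real.sqrt_lt' hT).2 h1
    have hA := A_zero v hv hv0 T σ hlap t htp.le htT
    have hs := Measure.integral_comp_smul (volume : Measure (EuclideanSpace ℝ (Fin d)))
      (fun x => v x * ((max 0 (τ - ‖x‖ ^ 2) : ℝ) : ℂ)) t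
    have e1 : ∀ y : EuclideanSpace ℝ (Fin d),
        v (t • y) * ((max 0 (τ - ‖t • y‖ ^ 2) : ℝ) : ℂ) = (τ : ℂ) * (v (t • y) * (w 1 y : ℂ)) := by
      intro y
      have : max 0 (τ - ‖t • y‖ ^ 2) = τ * w 1 y := by
        rw [w, pow_one, mul_max_of_nonneg _ _ h0.le, norm_smul, mul_pow, Real.norm_eq_abs, sq_abs, htt]
        ring_nf
      rw [this]
      push_cast
      ring
    simp only [e1, integral_const_mul] at hs
    rw [A] at hA
    rw [hA, mul_zero] at hs
    have hne : |(t ^ Module.finrank ℝ (EuclideanSpace ℝ (Fin d)))⁻¹| ≠ 0 := by positivity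
    exact (smul_eq_zero.1 hs.symm).resolve_left hne

lemma ball_zero (v : EuclideanSpace ℝ (Fin d) → ℂ) (hv : ContDiff ℝ 2 v) (hv0 : v 0 = 0)
    (T : ℝ) (hT : 0 < T) (σ : ℝ)
    (hlap : ∀ x ∈ ball (0 : EuclideanSpace ℝ (Fin d)) T, lap v x = (σ : ℂ) * v x)
    (r : ℝ) (hr0 : 0 ≤ r) (hr : r < T) :
    ∫ x in closedBall (0 : EuclideanSpace ℝ (Fin d)) r, v x = 0 := by
  set δ : ℝ := (T ^ 2 - r ^ 2) / 2 with hδ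
  have hδ0 : 0 < δ := by rw [hδ]; nlinarith
  let h : ℕ → ℝ := fun n => δ / (n + 1)
  have hh0 : ∀ n, 0 < h n := fun n => by positivity
  have hhδ : ∀ n, h n ≤ δ := fun n => div_le_self hδ0.le (by
    have : (0 : ℝ) ≤ n := by positivity
    linarith)
  have hhlim : Tendsto h atTop (𝓝 0) := by
    have := (tendsto_one_div_add_atTop_nhds_zero_nat (𝕜 := ℝ)).const_mul δ
    simpa [h, div_eq_mul_inv] using this
  have hvc : Continuous v := hv.continuous
  have hint : ∀ τ : ℝ, τ < T ^ 2 → Integrable (fun x : EuclideanSpace ℝ (Fin d) =>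
      v x * ((max 0 (τ - ‖x‖ ^ 2) : ℝ) : ℂ)) := by
    intro τ hτ
    apply Continuous.integrable_of_hasCompactSupport
    · fun_prop
    · refine HasCompactSupport.intro (isCompact_closedBall (0 : EuclideanSpace ℝ (Fin d)) T)
        (fun y hy => ?_)
      have : T < ‖y‖ := by simpa using hy
      rw [max_eq_left (by nlinarith)]
      simp
  let q : ℕ → EuclideanSpace ℝ (Fin d) → ℝ := fun n x =>
    (max 0 (r ^ 2 + h n - ‖x‖ ^ 2) - max 0 (r ^ 2 - ‖x‖ ^ 2)) / h n
  have hq0 : ∀ n x, 0 ≤ q n x := fun n x => by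
    apply div_nonneg _ (hh0 n).le
    rw [sub_nonneg]
    exact max_le_max le_rfl (by linarith [hh0 n])
  have hq1 : ∀ n x, q n x ≤ 1 := fun n x => by
    rw [div_le_one (hh0 n), sub_le_iff_le_add]
    apply max_le
    · linarith [hh0 n, le_max_left 0 (r ^ 2 - ‖x‖ ^ 2)]
    · linarith [hh0 n, le_max_right 0 (r ^ 2 - ‖x‖ ^ 2)]
  have hr2 : r ^ 2 < T ^ 2 := by nlinarith
  have hzero : ∀ n, ∫ x, v x * (q n x : ℂ) = 0 := by
    intro n
    have hn : r ^ 2 + h n < T ^ 2 := by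
      have := hhδ n
      rw [hδ] at this
      linarith
    have e : ∀ x, v x * (q n x : ℂ) = (h n : ℂ)⁻¹ * (v x * ((max 0 (r ^ 2 + h n - ‖x‖ ^ 2) : ℝ) : ℂ) -
        v x * ((max 0 (r ^ 2 - ‖x‖ ^ 2) : ℝ) : ℂ)) := by
      intro x
      simp only [q, Complex.ofReal_div, Complex.ofReal_sub]
      ring
    simp only [e]
    rw [integral_const_mul, integral_sub (hint _ hn) (hint _ hr2),
      F_zero v hv hv0 T hT σ hlap _ (by have := hh0 n; positivity) hn,
      F_zero v hv hv0 T hT σ hlap _ (by positivity) hr2]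
    simp
  have hlim : Tendsto (fun n => ∫ x, v x * (q n x : ℂ)) atTop
      (𝓝 (∫ x, (closedBall (0 : EuclideanSpace ℝ (Fin d)) r).indicator v x)) := by
    refine tendsto_integral_of_dominated_convergence
      ((closedBall (0 : EuclideanSpace ℝ (Fin d)) T).indicator fun x => ‖v x‖) ?_ ?_ ?_ ?_
    · intro n
      apply Continuous.aestronglyMeasurable
      have : Continuous (q n) := by
        simp only [q]
        fun_prop
      fun_prop
    · rw [integrable_indicator_iff measurableSet_closedBall]
      exact hvc.norm.continuousOn.integrableOn_compact (isCompact_closedBall _ _)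
    · intro n
      refine Eventually.of_forall fun x => ?_
      rw [norm_mul, Complex.norm_real, Real.norm_eq_abs, abs_of_nonneg (hq0 n x)]
      by_cases hx : x ∈ closedBall (0 : EuclideanSpace ℝ (Fin d)) T
      · rw [Set.indicator_of_mem hx]
        exact mul_le_of_le_one_right (norm_nonneg _) (hq1 n x)
      · have h1 : T < ‖x‖ := by simpa using hx
        have h2 := hhδ n
        have h3 : T ^ 2 < ‖x‖ ^ 2 := by nlinarith
        rw [Set.indicator_of_notMem hx]
        simp only [q]
        rw [max_eq_left (by linarith), max_eq_left (by linarith)]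
        simp
    · refine Eventually.of_forall fun x => ?_
      by_cases hx : x ∈ closedBall (0 : EuclideanSpace ℝ (Fin d)) r
      · have h1 : ‖x‖ ≤ r := by simpa using hx
        have h3 : ‖x‖ ^ 2 ≤ r ^ 2 := by nlinarith [norm_nonneg x]
        rw [Set.indicator_of_mem hx]
        have : ∀ n, q n x = 1 := by
          intro n
          have := hh0 n
          simp only [q]
          rw [max_eq_right (by linarith), max_eq_right (by linarith), div_eq_one_iff_eq this.ne']
          ring
        simp [this]
      · have h1 : r < ‖x‖ := by simpa using hx
        have h3 : r ^ 2 < ‖x‖ ^ 2 := by nlinarith [norm_nonneg x]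
        rw [Set.indicator_of_notMem hx]
        refine tendsto_const_nhds.congr' ?_
        filter_upwards [hhlim.eventually (gt_mem_nhds (sub_pos.2 h3))] with n hn
        simp only [q]
        rw [max_eq_left (by linarith), max_eq_left (by linarith)]
        simp
  simp only [hzero] at hlim
  rw [integral_indicator measurableSet_closedBall] at hlim
  exact tendsto_nhds_unique hlim tendsto_const_nhds |>.trans rfl

lemma radial_real (f : EuclideanSpace ℝ (Fin d) → ℝ) (hf : Continuous f) (ρ : ℝ) (hρ : 0 ≤ ρ)
    (h : ∀ r, 0 ≤ r → r ≤ ρ → ∫ x in closedBall (0 : EuclideanSpace ℝ (Fin d)) r, f x = 0)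
    (b : ℝ → ℝ) (hb : Measurable b)
    (hbi : IntegrableOn (fun x => b ‖x‖) (closedBall (0 : EuclideanSpace ℝ (Fin d)) ρ))
    (hfbi : IntegrableOn (fun x => f x * b ‖x‖) (closedBall (0 : EuclideanSpace ℝ (Fin d)) ρ)) :
    ∫ x in closedBall (0 : EuclideanSpace ℝ (Fin d)) ρ, f x * b ‖x‖ = 0 := by
  obtain ⟨C, hC⟩ := (isCompact_closedBall (0 : EuclideanSpace ℝ (Fin d)) ρ).exists_bound_of_continuousOn
    hf.continuousOn
  set K := closedBall (0 : EuclideanSpace ℝ (Fin d)) ρ with hK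
  have hKm : MeasurableSet K := measurableSet_closedBall
  have hC0 : 0 ≤ C := (norm_nonneg _).trans (hC 0 (by simp [hK, hρ]))
  have hpos : ∀ x ∈ K, 0 ≤ C + f x := fun x hx => by
    have := abs_le.1 (hC x hx)
    linarith [this.1]
  have hgen : ∀ g : EuclideanSpace ℝ (Fin d) → ℝ, Continuous g → (∀ x ∈ K, 0 ≤ g x) → ∀ a,
      (((volume.restrict K).withDensity (fun x => ENNReal.ofReal (g x))).map (fun x => ‖x‖)) (Set.Iic a)
        = if 0 ≤ a then ENNReal.ofReal (∫ x in closedBall (0 : EuclideanSpace ℝ (Fin d)) (min a ρ), g x) else 0 := by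
    intro g hg hg0 a
    rw [Measure.map_apply measurable_norm measurableSet_Iic]
    split_ifs with ha
    · have e : (fun x : EuclideanSpace ℝ (Fin d) => ‖x‖) ⁻¹' Set.Iic a = closedBall 0 a := by
        ext x; simp
      have e2 : closedBall (0 : EuclideanSpace ℝ (Fin d)) a ∩ K = closedBall 0 (min a ρ) := by
        ext x; simp [hK]
      rw [e, withDensity_apply _ measurableSet_closedBall,
        Measure.restrict_restrict measurableSet_closedBall, e2, ofReal_integral_eq_lintegral_ofReal]
      · exact hg.continuousOn.integrableOn_compact (isCompact_closedBall _ _)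
      · rw [Filter.EventuallyLE, ae_restrict_iff' measurableSet_closedBall]
        refine Eventually.of_forall fun x hx => hg0 x ?_
        rw [← e2] at hx
        exact hx.2
    · have e : (fun x : EuclideanSpace ℝ (Fin d) => ‖x‖) ⁻¹' Set.Iic a = ∅ := by
        ext x
        simp only [Set.mem_preimage, Set.mem_Iic, Set.mem_empty_iff_false, iff_false, not_le]
        exact lt_of_lt_of_le (not_le.1 ha) (norm_nonneg x)
      rw [e, measure_empty]
  have hgc : Continuous (fun x => C + f x) := by fun_prop
  have hfin : IsFiniteMeasure ((volume.restrict K).withDensity (fun x => ENNReal.ofReal (C + f x))) := by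
    apply isFiniteMeasure_withDensity_ofReal
    exact (hgc.continuousOn.integrableOn_compact (isCompact_closedBall _ _)).2
  have heq := Measure.ext_of_Iic
    (((volume.restrict K).withDensity (fun x => ENNReal.ofReal (C + f x))).map (fun x => ‖x‖))
    (((volume.restrict K).withDensity (fun x => ENNReal.ofReal C)).map (fun x => ‖x‖)) (by
      intro a
      rw [hgen _ hgc hpos, hgen (fun _ => C) continuous_const (fun _ _ => hC0)]
      split_ifs with ha
      · rw [integral_add, h _ (le_min ha hρ) (min_le_right _ _), add_zero]
        · exact continuous_const.continuousOn.integrableOn_compact (isCompact_closedBall _ _)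
        · exact hf.continuousOn.integrableOn_compact (isCompact_closedBall _ _)
      · rfl)
  have hI := congrArg (fun μ => ∫ s, b s ∂μ) heq
  rw [integral_map measurable_norm.aemeasurable hb.aestronglyMeasurable,
    integral_map measurable_norm.aemeasurable hb.aestronglyMeasurable,
    integral_withDensity_eq_integral_toReal_smul (by fun_prop) (by simp),
    integral_withDensity_eq_integral_toReal_smul (by fun_prop) (by simp)] at hI
  have e1 : ∫ x in K, (ENNReal.ofReal (C + f x)).toReal • b ‖x‖ = ∫ x in K, (C * b ‖x‖ + f x * b ‖x‖) := by
    refine setIntegral_congr_fun hKm fun x hx => ?_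
    simp only [smul_eq_mul]
    rw [ENNReal.toReal_ofReal (hpos x hx), add_mul]
  rw [e1, integral_add (hbi.const_mul C) hfbi, ENNReal.toReal_ofReal hC0] at hI
  simpa using hI

lemma radial_complex (v : EuclideanSpace ℝ (Fin d) → ℂ) (hv : Continuous v) (ρ : ℝ) (hρ : 0 ≤ ρ)
    (h : ∀ r, 0 ≤ r → r ≤ ρ → ∫ x in closedBall (0 : EuclideanSpace ℝ (Fin d)) r, v x = 0)
    (b : ℝ → ℝ) (hb : Measurable b)
    (hbi : IntegrableOn (fun x => b ‖x‖) (closedBall (0 : EuclideanSpace ℝ (Fin d)) ρ))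
    (hvbi : IntegrableOn (fun x => v x * (b ‖x‖ : ℂ)) (closedBall (0 : EuclideanSpace ℝ (Fin d)) ρ)) :
    ∫ x in closedBall (0 : EuclideanSpace ℝ (Fin d)) ρ, v x * (b ‖x‖ : ℂ) = 0 := by
  have hvi : ∀ r, IntegrableOn v (closedBall (0 : EuclideanSpace ℝ (Fin d)) r) := fun r =>
    hv.continuousOn.integrableOn_compact (isCompact_closedBall _ _)
  apply Complex.ext
  · have h1 := radial_real (fun x => (v x).re) (by fun_prop) ρ hρ (fun r h0 h1 => by
      have := Complex.reCLM.integral_comp_comm (hvi r)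
      simpa [h r h0 h1] using this) b hb hbi (by
      have := hvbi.re
      simpa [IntegrableOn] using this)
    have h2 := Complex.reCLM.integral_comp_comm hvbi
    rw [Complex.reCLM_apply] at h2
    rw [← h2]
    simpa using h1
  · have h1 := radial_real (fun x => (v x).im) (by fun_prop) ρ hρ (fun r h0 h1 => by
      have := Complex.imCLM.integral_comp_comm (hvi r)
      simpa [h r h0 h1] using this) b hb hbi (by
      have := hvbi.im
      simpa [IntegrableOn] using this)
    have h2 := Complex.imCLM.integral_comp_comm hvbi
    rw [Complex.imCLM_apply] at h2
    rw [← h2]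
    simpa using h1

lemma lap_congr {f g : EuclideanSpace ℝ (Fin d) → ℂ} {x : EuclideanSpace ℝ (Fin d)}
    (h : f =ᶠ[𝓝 x] g) : lap f x = lap g x := by
  unfold lap
  refine Finset.sum_congr rfl fun j _ => ?_
  have : (fun y => fderiv ℝ f y (EuclideanSpace.single j 1)) =ᶠ[𝓝 x]
      (fun y => fderiv ℝ g y (EuclideanSpace.single j 1)) := by
    filter_upwards [h.fderiv (𝕜 := ℝ)] with y hy
    rw [hy]
  rw [this.fderiv_eq]

lemma dir_diff {f : EuclideanSpace ℝ (Fin d) → ℂ} {x : EuclideanSpace ℝ (Fin d)}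
    (h : ContDiffAt ℝ 2 f x) (e : EuclideanSpace ℝ (Fin d)) :
    DifferentiableAt ℝ (fun y => fderiv ℝ f y e) x := by
  have h1 : ContDiffAt ℝ 1 (fderiv ℝ f) x := h.fderiv_right (by norm_num)
  exact (h1.clm_apply contDiffAt_const).differentiableAt (by norm_num)

lemma lap_sub {f g : EuclideanSpace ℝ (Fin d) → ℂ} {x : EuclideanSpace ℝ (Fin d)} (a : ℂ)
    (hf : ContDiffAt ℝ 2 f x) (hg : ContDiffAt ℝ 2 g x) :
    lap (fun y => f y - a * g y) x = lap f x - a * lap g x := by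
  unfold lap
  rw [Finset.mul_sum, ← Finset.sum_sub_distrib]
  refine Finset.sum_congr rfl fun j _ => ?_
  set e : EuclideanSpace ℝ (Fin d) := EuclideanSpace.single j 1
  have : (fun y => fderiv ℝ (fun y => f y - a * g y) y e) =ᶠ[𝓝 x]
      (fun y => fderiv ℝ f y e - a * fderiv ℝ g y e) := by
    filter_upwards [hf.eventually (by simp), hg.eventually (by simp)] with y hfy hgy
    have h1 := (hfy.differentiableAt (by norm_num)).hasFDerivAt
    have h2 := (hgy.differentiableAt (by norm_num)).hasFDerivAt
    rw [(h1.fun_sub (h2.const_mul a)).fderiv]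
    simp
  rw [this.fderiv_eq]
  rw [((dir_diff hf e).hasFDerivAt.fun_sub ((dir_diff hg e).hasFDerivAt.const_mul a)).fderiv]
  simp

lemma exp_hasFDerivAt (i : Fin d) (c : ℂ) (x : EuclideanSpace ℝ (Fin d)) :
    HasFDerivAt (fun y : EuclideanSpace ℝ (Fin d) => Complex.exp (c * ((y i : ℝ) : ℂ)))
      (Complex.exp (c * ((x i : ℝ) : ℂ)) • (c • (Complex.ofRealCLM ∘L
        (EuclideanSpace.proj i : EuclideanSpace ℝ (Fin d) →L[ℝ] ℝ)))) x := by
  have h1 : HasFDerivAt (fun y : EuclideanSpace ℝ (Fin d) => ((y i : ℝ) : ℂ))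
      (Complex.ofRealCLM ∘L (EuclideanSpace.proj i : EuclideanSpace ℝ (Fin d) →L[ℝ] ℝ)) x :=
    (Complex.ofRealCLM ∘L (EuclideanSpace.proj i : EuclideanSpace ℝ (Fin d) →L[ℝ] ℝ)).hasFDerivAt
  exact (h1.const_mul c).cexp

lemma lap_exp (i : Fin d) (c : ℂ) (x : EuclideanSpace ℝ (Fin d)) :
    lap (fun y : EuclideanSpace ℝ (Fin d) => Complex.exp (c * ((y i : ℝ) : ℂ))) x =
      c ^ 2 * Complex.exp (c * ((x i : ℝ) : ℂ)) := by
  unfold lap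
  have e1 : ∀ (j : Fin d) (y : EuclideanSpace ℝ (Fin d)),
      fderiv ℝ (fun y : EuclideanSpace ℝ (Fin d) => Complex.exp (c * ((y i : ℝ) : ℂ))) y
        (EuclideanSpace.single j 1) =
      (if i = j then c else 0) * Complex.exp (c * ((y i : ℝ) : ℂ)) := by
    intro j y
    rw [(exp_hasFDerivAt i c y).fderiv]
    by_cases hij : i = j
    · subst hij
      simp [mul_comm]
    · simp [hij]
  simp only [e1]
  have e2 : ∀ j : Fin d, fderiv ℝ (fun y : EuclideanSpace ℝ (Fin d) =>
      (if i = j then c else 0) * Complex.exp (c * ((y i : ℝ) : ℂ))) x (EuclideanSpace.single j 1) =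
      if i = j then c ^ 2 * Complex.exp (c * ((x i : ℝ) : ℂ)) else 0 := by
    intro j
    rw [((exp_hasFDerivAt i c x).const_mul _).fderiv, ← (exp_hasFDerivAt i c x).fderiv]
    simp only [_root_.smul_apply, e1, smul_eq_mul]
    split_ifs <;> ring
  simp only [e2]
  simp

lemma exp_contDiff (i : Fin d) (c : ℂ) :
    ContDiff ℝ 2 (fun y : EuclideanSpace ℝ (Fin d) => Complex.exp (c * ((y i : ℝ) : ℂ))) := by
  have h1 : ContDiff ℝ 2 (fun y : EuclideanSpace ℝ (Fin d) => ((y i : ℝ) : ℂ)) :=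
    (Complex.ofRealCLM ∘L (EuclideanSpace.proj i : EuclideanSpace ℝ (Fin d) →L[ℝ] ℝ)).contDiff
  exact (contDiff_const.mul h1).cexp

/-- smooth extension -/
lemma exists_ext (Ψ : EuclideanSpace ℝ (Fin d) → ℂ) (r₀ r₁ : ℝ) (h0 : 0 < r₀) (h1 : r₀ < r₁)
    (hΨ : ContDiffOn ℝ (⊤ : ℕ∞) Ψ (ball (0 : EuclideanSpace ℝ (Fin d)) r₁)) :
    ∃ Φ : EuclideanSpace ℝ (Fin d) → ℂ, ContDiff ℝ 2 Φ ∧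
      ∀ x ∈ closedBall (0 : EuclideanSpace ℝ (Fin d)) r₀, Φ x = Ψ x := by
  let χ : ContDiffBump (0 : EuclideanSpace ℝ (Fin d)) :=
    ⟨r₀, (r₀ + r₁) / 2, h0, by linarith⟩
  refine ⟨fun x => (χ x : ℂ) * Ψ x, ?_, fun x hx => ?_⟩
  · rw [contDiff_iff_contDiffAt]
    intro x
    by_cases hx : x ∈ ball (0 : EuclideanSpace ℝ (Fin d)) r₁
    · have h2 : ContDiffAt ℝ 2 Ψ x :=
        (hΨ.contDiffAt (isOpen_ball.mem_nhds hx)).of_le (by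
          have : ((2 : ℕ∞) : WithTop ℕ∞) ≤ ((⊤ : ℕ∞) : WithTop ℕ∞) := WithTop.coe_le_coe.2 le_top
          exact this)
      have h3 : ContDiff ℝ 2 (fun x => (χ x : ℂ)) := Complex.ofRealCLM.contDiff.comp χ.contDiff
      exact h3.contDiffAt.mul h2
    · have hx' : r₁ ≤ ‖x‖ := by simpa using hx
      have : (fun x => (χ x : ℂ) * Ψ x) =ᶠ[𝓝 x] fun _ => 0 := by
        have hm : (closedBall (0 : EuclideanSpace ℝ (Fin d)) ((r₀ + r₁) / 2))ᶜ ∈ 𝓝 x := by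
          refine isClosed_closedBall.isOpen_compl.mem_nhds ?_
          simp only [Set.mem_compl_iff, mem_closedBall, dist_zero_right, not_le]
          linarith
        filter_upwards [hm] with y hy
        have hy' : (r₀ + r₁) / 2 < dist y 0 := by simpa using hy
        rw [χ.zero_of_le_dist hy'.le]
        simp
      exact contDiffAt_const.congr_of_eventuallyEq this
  · simp only
    rw [χ.one_of_mem_closedBall hx]
    simp

end EigAux
/-- If `Ψ` is smooth on `B(0,2R₀)` with `ΔΨ = σΨ` there, `c² = σ`, and `β` is a bounded
measurable non-negative rotationally invariant function on `B(0,2R₀)`, then for `0 < R < R₀`,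
`∫_{|Y|≤2R} Ψ(Y) β(Y) dY = Ψ(0) ∫_{|Y|≤2R} e^{c Y₁} β(Y) dY`. -/
theorem eigenfunction_integral_eq (d : ℕ) (hd : 1 ≤ d) (R₀ : ℝ) (hR₀ : 0 < R₀)
    (σ : ℝ) (c : ℂ) (hc : c ^ 2 = (σ : ℂ))
    (Ψ : EuclideanSpace ℝ (Fin d) → ℂ)
    (hΨsmooth : ContDiffOn ℝ (⊤ : ℕ∞) Ψ (ball (0 : EuclideanSpace ℝ (Fin d)) (2 * R₀)))
    (hΨeig : ∀ x ∈ ball (0 : EuclideanSpace ℝ (Fin d)) (2 * R₀), lap Ψ x = (σ : ℂ) * Ψ x)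
    (β : EuclideanSpace ℝ (Fin d) → ℝ)
    (hβmeas : Measurable β)
    (hβnonneg : ∀ y ∈ ball (0 : EuclideanSpace ℝ (Fin d)) (2 * R₀), 0 ≤ β y)
    (hβbdd : ∃ C : ℝ, ∀ y ∈ ball (0 : EuclideanSpace ℝ (Fin d)) (2 * R₀), β y ≤ C)
    (hβrot : ∀ (Rot : EuclideanSpace ℝ (Fin d) ≃ₗᵢ[ℝ] EuclideanSpace ℝ (Fin d)),
      ∀ y ∈ ball (0 : EuclideanSpace ℝ (Fin d)) (2 * R₀), β (Rot y) = β y)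
    (R : ℝ) (hR : 0 < R) (hRR₀ : R < R₀) :
    ∫ Y in closedBall (0 : EuclideanSpace ℝ (Fin d)) (2 * R), Ψ Y * (β Y : ℂ) =
      Ψ 0 * ∫ Y in closedBall (0 : EuclideanSpace ℝ (Fin d)) (2 * R),
        Complex.exp (c * ((Y ⟨0, hd⟩ : ℝ) : ℂ)) * (β Y : ℂ) := by
  have hpos : 0 < 2 * R := by linarith
  set r₀ := R + R₀ with hr₀
  obtain ⟨Φ, hΦ, hΦΨ⟩ := EigAux.exists_ext Ψ r₀ (2 * R₀) (by linarith) (by linarith) hΨsmooth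
  set i : Fin d := ⟨0, hd⟩ with hi
  let g : EuclideanSpace ℝ (Fin d) → ℂ := fun y => Complex.exp (c * ((y i : ℝ) : ℂ))
  have hg : ContDiff ℝ 2 g := EigAux.exp_contDiff i c
  let v : EuclideanSpace ℝ (Fin d) → ℂ := fun y => Φ y - Ψ 0 * g y
  have hv : ContDiff ℝ 2 v := hΦ.sub (contDiff_const.mul hg)
  have hv0 : v 0 = 0 := by
    simp only [v, g]
    rw [hΦΨ 0 (by simp; linarith)]
    simp
  have hlap : ∀ x ∈ ball (0 : EuclideanSpace ℝ (Fin d)) r₀, lap v x = (σ : ℂ) * v x := by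
    intro x hx
    have h1 : Φ =ᶠ[nhds x] Ψ := by
      filter_upwards [isOpen_ball.mem_nhds hx] with y hy
      exact hΦΨ y (ball_subset_closedBall hy)
    simp only [v]
    rw [EigAux.lap_sub (Ψ 0) hΦ.contDiffAt hg.contDiffAt, EigAux.lap_congr h1, EigAux.lap_exp,
      hΨeig x (ball_subset_ball (by linarith) hx), h1.eq_of_nhds, hc]
    ring
  have hball : ∀ r, 0 ≤ r → r ≤ 2 * R →
      ∫ x in closedBall (0 : EuclideanSpace ℝ (Fin d)) r, v x = 0 := fun r h0 h1 =>
    EigAux.ball_zero v hv hv0 r₀ (by linarith) σ hlap r h0 (by linarith)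
  let b : ℝ → ℝ := fun s => β (s • EuclideanSpace.single i (1 : ℝ))
  have hb : Measurable b := hβmeas.comp (by fun_prop)
  have hsub : closedBall (0 : EuclideanSpace ℝ (Fin d)) (2 * R) ⊆ ball 0 (2 * R₀) :=
    closedBall_subset_ball (by linarith)
  have hbβ : ∀ y ∈ closedBall (0 : EuclideanSpace ℝ (Fin d)) (2 * R), b ‖y‖ = β y := by
    intro y hy
    have hn : ‖y‖ = ‖(‖y‖ • EuclideanSpace.single i (1 : ℝ) : EuclideanSpace ℝ (Fin d))‖ := by
      simp [norm_smul]
    have h1 := Submodule.reflection_sub hn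
    have h2 := hβrot (Submodule.reflection (Submodule.span ℝ
      {y - ‖y‖ • EuclideanSpace.single i (1 : ℝ)})ᗮ) y (hsub hy)
    rw [h1] at h2
    exact h2
  obtain ⟨C, hC⟩ := hβbdd
  have hKm : MeasurableSet (closedBall (0 : EuclideanSpace ℝ (Fin d)) (2 * R)) :=
    measurableSet_closedBall
  have hprod : ∀ f : EuclideanSpace ℝ (Fin d) → ℂ, Continuous f →
      IntegrableOn (fun x => f x * (β x : ℂ)) (closedBall 0 (2 * R)) := by
    intro f hf
    have hfi : IntegrableOn f (closedBall (0 : EuclideanSpace ℝ (Fin d)) (2 * R)) :=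
      hf.continuousOn.integrableOn_compact (isCompact_closedBall _ _)
    refine Integrable.mul_bdd (c := C) hfi (by fun_prop) ?_
    rw [ae_restrict_iff' hKm]
    refine Filter.Eventually.of_forall fun x hx => ?_
    rw [Complex.norm_real, Real.norm_eq_abs, abs_of_nonneg (hβnonneg x (hsub hx))]
    exact hC x (hsub hx)
  have hβi : IntegrableOn β (closedBall 0 (2 * R)) := by
    have := (hprod (fun _ => 1) continuous_const).re
    simpa [IntegrableOn] using this
  have key := EigAux.radial_complex v hv.continuous (2 * R) hpos.le hball b hb
    (hβi.congr_fun (fun x hx => (hbβ x hx).symm) hKm)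
    ((hprod v hv.continuous).congr_fun (fun x hx => by simp only [hbβ x hx]) hKm)
  have e1 : ∫ Y in closedBall (0 : EuclideanSpace ℝ (Fin d)) (2 * R), v Y * (b ‖Y‖ : ℂ) =
      ∫ Y in closedBall (0 : EuclideanSpace ℝ (Fin d)) (2 * R),
        (Φ Y * (β Y : ℂ) - Ψ 0 * (g Y * (β Y : ℂ))) := by
    refine setIntegral_congr_fun hKm fun x hx => ?_
    simp only [hbβ x hx, v]
    ring
  have e2 : ∫ Y in closedBall (0 : EuclideanSpace ℝ (Fin d)) (2 * R), Ψ Y * (β Y : ℂ) =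
      ∫ Y in closedBall (0 : EuclideanSpace ℝ (Fin d)) (2 * R), Φ Y * (β Y : ℂ) := by
    refine setIntegral_congr_fun hKm fun x hx => ?_
    rw [hΦΨ x (closedBall_subset_closedBall (by linarith) hx)]
  rw [e1, integral_sub (hprod Φ hΦ.continuous) ((hprod g hg.continuous).const_mul _),
    integral_const_mul] at key
  rw [e2]
  exact sub_eq_zero.1 key
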